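/- Let μ be the Lebesgue measure on [0,1] and p ∈ [1,∞). Then for every k ≥ 2, the set 𝒢_{p,k} is weakly dense in L^p([0,1]). -/

import Mathlib

open MeasureTheory ENNReal Filter Topology

variable {Ω : Type*} [MeasurableSpace Ω]

/-- A measurable function taking at most `k` distinct values. -/
def IsSimpleLE (k : ℕ) (g : Ω → ℝ) : Prop :=
  Measurable g ∧ ∃ s : Finset ℝ, s.card ≤ k ∧ ∀ x, g x ∈ s

/-- The set `𝒢_{p,k}` of elements of `L^p` that agree a.e. with a measurable
function taking at most `k` distinct values. -/
def Gpk (p : ℝ≥0∞) (μ : MeasureTheory.Measure Ω) (k : ℕ) : Set (Lp ℝ p μ) :=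
  {f | ∃ g : Ω → ℝ, IsSimpleLE k g ∧ (f : Ω → ℝ) =ᵐ[μ] g}

/-!
Simple functions are norm dense in `L^p` because `p < ∞`, so it suffices to approximate weakly a
simple function `f` with `|f| ≤ M` by functions with values in `{-M, M}`. Cut the space into pieces
`A i` of small measure on which `f` is a constant `c i`, and replace each `c i` by a suitable sign
`e i = ±M`. For a finite set `t` of continuous functionals, the errors form the vector
`∑ i, (e i - c i) • v i` of `ℝ^t`, where `v i = (φ(1_{A i}))_{φ ∈ t}`. Choosing the signs one after
another so that each new term makes an obtuse angle with the preceding partial sum, we bound the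
square of its length by `(2M)² ∑ i, ‖v i‖² = (2M)² ∑ φ ∈ t, ∑ i, φ(1_{A i})²`. Finally
`∑ i, φ(1_{A i})² ≤ max_i |φ(1_{A i})| · ∑ i, |φ(1_{A i})|`, where the sum on the right is at most
`‖φ‖ ‖1‖` whatever the partition, while the maximum is at most `‖φ‖ max_i ‖1_{A i}‖`, which is as
small as we like.
-/

section WeakTopology

variable {𝕜 E F : Type*}

theorem mem_closure_weakBilin_iff [NormedField 𝕜] [AddCommGroup E] [Module 𝕜 E] [AddCommGroup F]
    [Module 𝕜 F] {B : E →ₗ[𝕜] F →ₗ[𝕜] 𝕜} {S : Set (WeakBilin B)} {x : WeakBilin B} :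
    x ∈ closure S ↔ ∀ t : Finset F, ∀ r > 0, ∃ y ∈ S, ∀ φ ∈ t, ‖B (y - x) φ‖ < r := by
  have hball {t : Finset F} {r : ℝ} (hr : 0 < r) (x y : E) :
      y ∈ (t.sup B.toSeminormFamily).ball x r ↔ ∀ φ ∈ t, ‖B (y - x) φ‖ < r := by
    rw [Seminorm.ball_finset_sup_eq_iInter _ _ _ hr, Set.mem_iInter₂]
    exact forall₂_congr fun φ _ ↦ Seminorm.mem_ball _
  rw [mem_closure_iff_nhds_basis (LinearMap.weakBilin_withSeminorms B).hasBasis_ball]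
  simp only [Prod.forall]
  exact forall₃_congr fun t r hr ↦ exists_congr fun y ↦ and_congr_right fun _ ↦ hball hr x y

theorem toWeakSpace_mem_closure_image_iff [NormedField 𝕜] [AddCommGroup E] [Module 𝕜 E]
    [TopologicalSpace E] {S : Set E} {x : E} :
    toWeakSpace 𝕜 E x ∈ closure (toWeakSpace 𝕜 E '' S) ↔
      ∀ t : Finset (StrongDual 𝕜 E), ∀ r > 0, ∃ y ∈ S, ∀ φ ∈ t, ‖φ (y - x)‖ < r :=
  mem_closure_weakBilin_iff.trans <| forall₃_congr fun _ _ _ ↦ Set.exists_mem_image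

theorem dense_toWeakSpace_image_of_forall_mem_closure [CommSemiring 𝕜] [TopologicalSpace 𝕜]
    [ContinuousAdd 𝕜] [ContinuousConstSMul 𝕜 𝕜] [AddCommMonoid E] [Module 𝕜 E] [TopologicalSpace E]
    {D S : Set E} (hD : Dense D)
    (h : ∀ x ∈ D, toWeakSpace 𝕜 E x ∈ closure (toWeakSpace 𝕜 E '' S)) :
    Dense (toWeakSpace 𝕜 E '' S) := by
  have hD' : Dense (toWeakSpace 𝕜 E '' D) :=
    (toWeakSpace 𝕜 E).surjective.denseRange.dense_image (toWeakSpaceCLM 𝕜 E).continuous hD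
  exact dense_closure.1 (hD'.mono (Set.image_subset_iff.2 h))

end WeakTopology

section Rounding

variable {ι E : Type*} {a b : ℝ}

theorem exists_mem_pair_norm_add_sub_smul_sq_le [SeminormedAddCommGroup E] [InnerProductSpace ℝ E]
    {c : ℝ} (hc : c ∈ Set.Icc a b) (w v : E) :
    ∃ d ∈ ({a, b} : Set ℝ), ‖w + (d - c) • v‖ ^ 2 ≤ ‖w‖ ^ 2 + (b - a) ^ 2 * ‖v‖ ^ 2 := by
  obtain ⟨hac, hcb⟩ := hc
  obtain ⟨d, hd, hdc, hobtuse⟩ : ∃ d ∈ ({a, b} : Set ℝ),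
      |d - c| ≤ b - a ∧ (d - c) * inner ℝ w v ≤ 0 := by
    rcases le_total 0 (inner ℝ w v) with h | h
    · exact ⟨a, by simp, abs_le.2 ⟨by linarith, by linarith⟩,
        mul_nonpos_of_nonpos_of_nonneg (by linarith) h⟩
    · exact ⟨b, by simp, abs_le.2 ⟨by linarith, by linarith⟩,
        mul_nonpos_of_nonneg_of_nonpos (by linarith) h⟩
  refine ⟨d, hd, ?_⟩
  calc ‖w + (d - c) • v‖ ^ 2
      = ‖w‖ ^ 2 + 2 * ((d - c) * inner ℝ w v) + |d - c| ^ 2 * ‖v‖ ^ 2 := by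
        rw [norm_add_sq_real, real_inner_smul_right, norm_smul, mul_pow, Real.norm_eq_abs]
    _ ≤ ‖w‖ ^ 2 + 2 * 0 + (b - a) ^ 2 * ‖v‖ ^ 2 := by gcongr
    _ = ‖w‖ ^ 2 + (b - a) ^ 2 * ‖v‖ ^ 2 := by ring

theorem exists_rounding_norm_sum_sq_le [SeminormedAddCommGroup E] [InnerProductSpace ℝ E]
    {s : Finset ι} {c : ι → ℝ} (hc : ∀ i ∈ s, c i ∈ Set.Icc a b) (v : ι → E) :
    ∃ e : ι → ℝ, (∀ i, e i ∈ ({a, b} : Set ℝ)) ∧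
      ‖∑ i ∈ s, (e i - c i) • v i‖ ^ 2 ≤ (b - a) ^ 2 * ∑ i ∈ s, ‖v i‖ ^ 2 := by
  classical
  induction s using Finset.induction_on with
  | empty => exact ⟨fun _ ↦ a, by simp⟩
  | insert j s hj ih =>
    obtain ⟨hcj, hcs⟩ := Finset.forall_mem_insert _ _ _ |>.1 hc
    obtain ⟨e, he, hsum⟩ := ih hcs
    obtain ⟨d, hd, hstep⟩ :=
      exists_mem_pair_norm_add_sub_smul_sq_le hcj (∑ i ∈ s, (e i - c i) • v i) (v j)
    have hupdate : ∑ i ∈ s, (Function.update e j d i - c i) • v i = ∑ i ∈ s, (e i - c i) • v i :=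
      Finset.sum_congr rfl fun i hi ↦ by rw [Function.update_of_ne (ne_of_mem_of_not_mem hi hj)]
    refine ⟨Function.update e j d,
      (Function.forall_update_iff e fun _ x ↦ x ∈ ({a, b} : Set ℝ)).2 ⟨hd, fun i _ ↦ he i⟩, ?_⟩
    rw [Finset.sum_insert hj, Finset.sum_insert hj, hupdate, Function.update_self, add_comm]
    linarith

variable [SeminormedAddCommGroup E] [NormedSpace ℝ E] {s : Finset ι} {u : ι → E} {C δ : ℝ}

theorem sum_abs_apply_le (hC : ∀ h : ι → ℝ, (∀ i, |h i| ≤ 1) → ‖∑ i ∈ s, h i • u i‖ ≤ C)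
    (φ : StrongDual ℝ E) : ∑ i ∈ s, |φ (u i)| ≤ ‖φ‖ * C := by
  have hsign : ∀ x : ℝ, |(SignType.sign x : ℝ)| ≤ 1 := fun x ↦ by
    rcases lt_trichotomy x 0 with h | h | h <;> simp [h]
  calc ∑ i ∈ s, |φ (u i)| = φ (∑ i ∈ s, (SignType.sign (φ (u i)) : ℝ) • u i) := by
        simp only [map_sum, map_smul, smul_eq_mul, sign_mul_self]
    _ ≤ ‖φ‖ * ‖∑ i ∈ s, (SignType.sign (φ (u i)) : ℝ) • u i‖ :=
        (le_abs_self _).trans (φ.le_opNorm _)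
    _ ≤ ‖φ‖ * C := by gcongr; exact hC _ fun i ↦ hsign _

theorem sum_apply_sq_le (hC : ∀ h : ι → ℝ, (∀ i, |h i| ≤ 1) → ‖∑ i ∈ s, h i • u i‖ ≤ C)
    (hδ : 0 ≤ δ) (hu : ∀ i ∈ s, ‖u i‖ ≤ δ) (φ : StrongDual ℝ E) :
    ∑ i ∈ s, φ (u i) ^ 2 ≤ δ * C * ‖φ‖ ^ 2 :=
  calc ∑ i ∈ s, φ (u i) ^ 2 = ∑ i ∈ s, |φ (u i)| * |φ (u i)| := by simp only [abs_mul_abs_self, sq]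
    _ ≤ ∑ i ∈ s, ‖φ‖ * δ * |φ (u i)| := by
        gcongr with i hi
        exact φ.le_opNorm_of_le (hu i hi)
    _ = ‖φ‖ * δ * ∑ i ∈ s, |φ (u i)| := by rw [Finset.mul_sum]
    _ ≤ ‖φ‖ * δ * (‖φ‖ * C) := by gcongr; exact sum_abs_apply_le hC φ
    _ = δ * C * ‖φ‖ ^ 2 := by ring

theorem exists_rounding_apply_sum_sq_le {c : ι → ℝ} (hc : ∀ i ∈ s, c i ∈ Set.Icc a b)
    (hC : ∀ h : ι → ℝ, (∀ i, |h i| ≤ 1) → ‖∑ i ∈ s, h i • u i‖ ≤ C)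
    (hδ : 0 ≤ δ) (hu : ∀ i ∈ s, ‖u i‖ ≤ δ) (t : Finset (StrongDual ℝ E)) :
    ∃ e : ι → ℝ, (∀ i, e i ∈ ({a, b} : Set ℝ)) ∧ ∀ φ ∈ t,
      φ (∑ i ∈ s, (e i - c i) • u i) ^ 2 ≤ (b - a) ^ 2 * (C * ∑ ψ ∈ t, ‖ψ‖ ^ 2) * δ := by
  let v (i : ι) : EuclideanSpace ℝ t := WithLp.toLp 2 fun ψ ↦ ψ.1 (u i)
  obtain ⟨e, he, hsum⟩ := exists_rounding_norm_sum_sq_le hc v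
  refine ⟨e, he, fun φ hφ ↦ ?_⟩
  have hcoord : φ (∑ i ∈ s, (e i - c i) • u i) = (∑ i ∈ s, (e i - c i) • v i) ⟨φ, hφ⟩ := by simp [v]
  calc φ (∑ i ∈ s, (e i - c i) • u i) ^ 2 = ‖(∑ i ∈ s, (e i - c i) • v i) ⟨φ, hφ⟩‖ ^ 2 := by
        rw [hcoord, Real.norm_eq_abs, sq_abs]
    _ ≤ ‖∑ i ∈ s, (e i - c i) • v i‖ ^ 2 := by gcongr; exact PiLp.norm_apply_le _ _
    _ ≤ (b - a) ^ 2 * ∑ i ∈ s, ‖v i‖ ^ 2 := hsum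
    _ = (b - a) ^ 2 * ∑ ψ ∈ t, ∑ i ∈ s, ψ (u i) ^ 2 := by
        simp only [EuclideanSpace.norm_sq_eq, v, Real.norm_eq_abs, sq_abs]
        rw [Finset.sum_comm, Finset.sum_coe_sort t fun ψ ↦ ∑ i ∈ s, ψ (u i) ^ 2]
    _ ≤ (b - a) ^ 2 * ∑ ψ ∈ t, δ * C * ‖ψ‖ ^ 2 := by
        gcongr with ψ; exact sum_apply_sq_le hC hδ hu ψ
    _ = (b - a) ^ 2 * (C * ∑ ψ ∈ t, ‖ψ‖ ^ 2) * δ := by rw [← Finset.mul_sum]; ring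

end Rounding

section FiniteDivisibility

variable {μ : Measure Ω}

/-- A measure is *finely divisible* if for every `ε > 0` the space is covered by finitely many
measurable sets of measure at most `ε`. For finite measures this is nonatomicity in the classical
sense (every set of positive measure splits into two), which on a general measurable space is
stronger than `NullSingletonClass`. -/
def IsFinelyDivisible (μ : Measure Ω) : Prop :=
  ∀ ε ≠ 0, ∃ 𝒜 : Finset (Set Ω), (∀ A ∈ 𝒜, MeasurableSet A ∧ μ A ≤ ε) ∧ ∀ x, ∃ A ∈ 𝒜, x ∈ A

namespace IsFinelyDivisible

protected theorem isFiniteMeasure (hμ : IsFinelyDivisible μ) : IsFiniteMeasure μ := by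
  obtain ⟨𝒜, h𝒜, hcover⟩ := hμ 1 one_ne_zero
  refine ⟨?_⟩
  calc μ Set.univ ≤ μ (⋃ A ∈ 𝒜, A) := measure_mono fun x _ ↦ by simpa using hcover x
    _ ≤ ∑ A ∈ 𝒜, μ A := measure_biUnion_finset_le _ _
    _ < ∞ := ENNReal.sum_lt_top.2 fun A hA ↦ (h𝒜 A hA).2.trans_lt one_lt_top

theorem of_map {X : Type*} [MeasurableSpace X] {f : Ω → X} (hf : Measurable f)
    (h : IsFinelyDivisible (μ.map f)) : IsFinelyDivisible μ := by
  classical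
  intro ε hε
  obtain ⟨𝒜, h𝒜, hcover⟩ := h ε hε
  refine ⟨𝒜.image (f ⁻¹' ·), ?_, fun x ↦ ?_⟩
  · simp only [Finset.forall_mem_image]
    exact fun A hA ↦ ⟨hf (h𝒜 A hA).1, (Measure.map_apply hf (h𝒜 A hA).1).symm.trans_le (h𝒜 A hA).2⟩
  · simpa using hcover (f x)

theorem of_compactSpace [TopologicalSpace Ω] [CompactSpace Ω] [OpensMeasurableSpace Ω]
    [μ.OuterRegular] [NullSingletonClass μ] : IsFinelyDivisible μ := by
  classical
  intro ε hε
  have hsmall (x : Ω) : ∃ U : Set Ω, {x} ⊆ U ∧ IsOpen U ∧ μ U < ε :=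
    Set.exists_isOpen_lt_of_lt {x} ε (by simpa using pos_iff_ne_zero.2 hε)
  choose U hxU hU hUε using hsmall
  obtain ⟨t, ht⟩ := finite_cover_nhds fun x ↦ (hU x).mem_nhds (hxU x rfl)
  refine ⟨t.image U, ?_, fun x ↦ ?_⟩
  · simp only [Finset.forall_mem_image]
    exact fun x _ ↦ ⟨(hU x).measurableSet, (hUε x).le⟩
  · simpa using ht.ge (Set.mem_univ x)

theorem of_countablySeparated [MeasurableSpace.CountablySeparated Ω] [IsFiniteMeasure μ]
    [NullSingletonClass μ] : IsFinelyDivisible μ := by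
  obtain ⟨f, hf, hinj⟩ := MeasurableSpace.measurable_injection_nat_bool_of_countablySeparated Ω
  have : NullSingletonClass (μ.map f) := ⟨fun y ↦ by
    rw [Measure.map_apply hf (measurableSet_singleton y)]
    exact (Set.subsingleton_singleton.preimage hinj).measure_zero μ⟩
  exact of_map hf of_compactSpace

theorem exists_simpleFunc_measure_fiber_le (hμ : IsFinelyDivisible μ) {ε : ℝ≥0∞} (hε : ε ≠ 0) :
    ∃ F : SimpleFunc Ω ℕ, ∀ i, μ (F ⁻¹' {i}) ≤ ε := by
  obtain ⟨𝒜, h𝒜, hcover⟩ := hμ ε hε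
  let F : SimpleFunc Ω (𝒜 → Prop) :=
    { toFun := fun x A ↦ x ∈ A.1
      measurableSet_fiber' := fun v ↦
        measurable_pi_lambda (fun x (A : 𝒜) ↦ x ∈ A.1)
          (fun A ↦ measurableSet_setOfPred.1 (h𝒜 A A.2).1) (measurableSet_singleton v)
      finite_range' := Set.toFinite _ }
  obtain ⟨code, hcode⟩ := exists_injective_nat (𝒜 → Prop)
  refine ⟨F.map code, fun n ↦ ?_⟩
  rcases ((F.map code) ⁻¹' {n}).eq_empty_or_nonempty with hempty | ⟨x, hx⟩
  · simp only [hempty, measure_empty, zero_le]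
  obtain ⟨A, hA, hxA⟩ := hcover x
  refine (measure_mono fun y hy ↦ ?_).trans (h𝒜 A hA).2
  have hxy : F y = F x := hcode (hy.trans hx.symm)
  exact (congrFun hxy ⟨A, hA⟩).mpr hxA

end IsFinelyDivisible

end FiniteDivisibility

section Fibers

variable {ι : Type*} {p : ℝ≥0∞} {μ : Measure Ω} [IsFiniteMeasure μ]

/-- The indicator function of the fibre `F ⁻¹' {i}` of a simple function `F`, as an element of
`L^p`. The functions of the form `h ∘ F` are the linear combinations of these indicators. -/
noncomputable def fiberIndicatorLp (p : ℝ≥0∞) (μ : Measure Ω) [IsFiniteMeasure μ]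
    (F : SimpleFunc Ω ι) (i : ι) : Lp ℝ p μ :=
  indicatorConstLp p (F.measurableSet_fiber i) (measure_ne_top μ _) (1 : ℝ)

theorem coeFn_sum_smul_fiberIndicatorLp (F : SimpleFunc Ω ι) (h : ι → ℝ) :
    ⇑(∑ i ∈ F.range, h i • fiberIndicatorLp p μ F i) =ᵐ[μ] fun x ↦ h (F x) := by
  classical
  have hterm : ∀ᵐ x ∂μ, ∀ i ∈ F.range,
      (h i • fiberIndicatorLp p μ F i : Lp ℝ p μ) x = if F x = i then h i else 0 := by
    refine (ae_ball_iff F.range.countable_toSet).2 fun i _ ↦ ?_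
    have hind : fiberIndicatorLp p μ F i =ᵐ[μ] (F ⁻¹' {i}).indicator fun _ ↦ (1 : ℝ) :=
      indicatorConstLp_coeFn
    filter_upwards [Lp.coeFn_smul (h i) (fiberIndicatorLp p μ F i), hind] with x hsmul hx
    simp [hsmul, hx, Set.indicator_apply]
  filter_upwards [Lp.coeFn_fun_finsetSum F.range fun i ↦ h i • fiberIndicatorLp p μ F i, hterm]
    with x hsum hx
  rw [hsum, Finset.sum_congr rfl hx]
  simp

theorem norm_sum_smul_fiberIndicatorLp_le (F : SimpleFunc Ω ι) (h : ι → ℝ) (hh : ∀ i, |h i| ≤ 1) :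
    ‖∑ i ∈ F.range, h i • fiberIndicatorLp p μ F i‖ ≤ measureUnivNNReal μ ^ p.toReal⁻¹ := by
  refine (Lp.norm_le_of_ae_bound zero_le_one ?_).trans_eq (mul_one _)
  filter_upwards [coeFn_sum_smul_fiberIndicatorLp F h] with x hx
  rw [hx]
  exact hh (F x)

theorem norm_fiberIndicatorLp_le {F : SimpleFunc Ω ι} {i : ι} {δ : ℝ} (hp₀ : p ≠ 0) (hp : p ≠ ∞)
    (hδ : 0 ≤ δ) (hF : μ (F ⁻¹' {i}) ≤ ENNReal.ofReal (δ ^ p.toReal)) :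
    ‖fiberIndicatorLp p μ F i‖ ≤ δ := by
  have hp' : 0 < p.toReal := ENNReal.toReal_pos hp₀ hp
  calc ‖fiberIndicatorLp p μ F i‖ ≤ ‖(1 : ℝ)‖ * μ.real (F ⁻¹' {i}) ^ (1 / p.toReal) :=
        norm_indicatorConstLp_le
    _ ≤ 1 * (δ ^ p.toReal) ^ (1 / p.toReal) := by
        rw [norm_one]
        gcongr
        exact ENNReal.toReal_le_of_le_ofReal (by positivity) hF
    _ = δ := by rw [one_mul, one_div, Real.rpow_rpow_inv hδ hp'.ne']

theorem sum_smul_fiberIndicatorLp_mem_Gpk (F : SimpleFunc Ω ι) {e : ι → ℝ} {s : Finset ℝ}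
    (he : ∀ i, e i ∈ s) {k : ℕ} (hk : s.card ≤ k) :
    ∑ i ∈ F.range, e i • fiberIndicatorLp p μ F i ∈ Gpk p μ k :=
  ⟨F.map e, ⟨(F.map e).measurable, s, hk, fun x ↦ he (F x)⟩, coeFn_sum_smul_fiberIndicatorLp F e⟩

end Fibers

theorem exists_mem_Gpk_forall_abs_apply_sub_lt {μ : Measure Ω} (hμ : IsFinelyDivisible μ)
    {p : ℝ≥0∞} [Fact (1 ≤ p)] (hp : p ≠ ∞) {k : ℕ} (hk : 2 ≤ k) {f : Lp ℝ p μ}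
    {G : SimpleFunc Ω ℝ} (hfG : f =ᵐ[μ] G) (t : Finset (StrongDual ℝ (Lp ℝ p μ)))
    {r : ℝ} (hr : 0 < r) : ∃ g ∈ Gpk p μ k, ∀ φ ∈ t, |φ (g - f)| < r := by
  have := hμ.isFiniteMeasure
  obtain ⟨M, hM⟩ := G.exists_forall_norm_le
  obtain ⟨δ, hδ, hδr⟩ := exists_pos_mul_lt (pow_pos hr 2) ((M - -M) ^ 2 *
    ((measureUnivNNReal μ : ℝ) ^ p.toReal⁻¹ * ∑ ψ ∈ t, ‖ψ‖ ^ 2))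
  obtain ⟨P, hP⟩ := hμ.exists_simpleFunc_measure_fiber_le
    (ENNReal.ofReal_pos.2 (Real.rpow_pos_of_pos hδ p.toReal)).ne'
  let F : SimpleFunc Ω (ℝ × ℕ) := G.pair P
  have hsmall (i : ℝ × ℕ) : ‖fiberIndicatorLp p μ F i‖ ≤ δ := by
    refine norm_fiberIndicatorLp_le (zero_lt_one.trans_le Fact.out).ne' hp hδ.le
      ((measure_mono fun x hx ↦ ?_).trans (hP i.2))
    exact congrArg Prod.snd hx
  have hvalues : ∀ i ∈ F.range, i.1 ∈ Set.Icc (-M) M := fun i hi ↦ by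
    obtain ⟨x, rfl⟩ := SimpleFunc.mem_range.1 hi
    exact abs_le.1 (hM x)
  obtain ⟨e, he, hφ⟩ := exists_rounding_apply_sum_sq_le (c := Prod.fst) hvalues
    (norm_sum_smul_fiberIndicatorLp_le (p := p) (μ := μ) F) hδ.le (fun i _ ↦ hsmall i) t
  have hf_eq : f = ∑ i ∈ F.range, i.1 • fiberIndicatorLp p μ F i :=
    Lp.ext (hfG.trans (coeFn_sum_smul_fiberIndicatorLp F Prod.fst).symm)
  have herror : ∑ i ∈ F.range, e i • fiberIndicatorLp p μ F i - f =
      ∑ i ∈ F.range, (e i - i.1) • fiberIndicatorLp p μ F i := by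
    simp only [hf_eq, sub_smul, Finset.sum_sub_distrib]
  refine ⟨∑ i ∈ F.range, e i • fiberIndicatorLp p μ F i,
    sum_smul_fiberIndicatorLp_mem_Gpk F (s := {-M, M}) (by simpa using he)
      (Finset.card_le_two.trans hk), fun φ hφt ↦ abs_lt_of_sq_lt_sq ?_ hr.le⟩
  rw [herror]
  exact (hφ φ hφt).trans_lt hδr

theorem Gpk_weaklyDense_Icc_general {μ : Measure Ω} (hμ : IsFinelyDivisible μ) (p : ℝ≥0∞)
    [Fact (1 ≤ p)] (hp : p ≠ ∞) (k : ℕ) (hk : 2 ≤ k) :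
    Dense (show Set (WeakSpace ℝ (Lp ℝ p μ)) from Gpk p μ k) := by
  rw [← Set.image_id (Gpk p μ k)]
  refine dense_toWeakSpace_image_of_forall_mem_closure (Lp.simpleFunc.dense hp) fun f hf ↦
    toWeakSpace_mem_closure_image_iff.2 fun t r hr ↦ ?_
  have hfG := Lp.simpleFunc.toSimpleFunc_eq_toFun (⟨f, hf⟩ : Lp.simpleFunc ℝ p μ)
  exact exists_mem_Gpk_forall_abs_apply_sub_lt hμ hp hk hfG.symm t hr

theorem Gpk_weaklyDense_Icc (p : ℝ≥0∞) [Fact (1 ≤ p)] (hp : p ≠ ∞) (k : ℕ) (hk : 2 ≤ k) :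
    Dense (show Set (WeakSpace ℝ (Lp ℝ p (volume.restrict (Set.Icc (0:ℝ) 1)))) from
      Gpk p (volume.restrict (Set.Icc (0:ℝ) 1)) k) :=
  Gpk_weaklyDense_Icc_general .of_countablySeparated p hp k hk
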